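/- arXiv:math/9503212 — 2 statements merged into one kernel-verified Lean document; each statement's English description precedes it below -/
import Mathlib

section
/- Let X_1,…,X_k be jointly symmetric q-stable random variables (0<q≤2), i.e., X_i = ⟨Y, ξ_i⟩ where Y is a symmetric q-stable random vector in ℝ^n with characteristic function exp(-‖Σθ_i s_i‖_{L^q}^q). Let m<k and let f, g be even continuous positive definite functions on ℝ^m and ℝ^{k-m}. Then E[f(X_1,…,X_m) g(X_{m+1},…,X_k)] ≥ E[f(X_1,…,X_m)]·E[g(X_{m+1},…,X_k)]. -/
open MeasureTheory
open scoped RealInnerProductSpace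

/-- For `0 < q ≤ 2`, the function `x ↦ |x| ^ q` satisfies one half of the parallelogram law. -/
theorem abs_add_rpow_add_abs_sub_rpow_le {q : ℝ} (hq0 : 0 < q) (hq2 : q ≤ 2) (x y : ℝ) :
    |x + y| ^ q + |x - y| ^ q ≤ 2 * (|x| ^ q + |y| ^ q) := by
  have key (z : ℝ) : |z| ^ q = (z ^ 2) ^ (q / 2) := by
    rw [← sq_abs, ← Real.rpow_natCast, ← Real.rpow_mul (abs_nonneg z)]
    congr 1
    push_cast
    ring
  have hc := (Real.concaveOn_rpow (p := q / 2) (by linarith) (by linarith)).2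
    (Set.mem_Ici.2 (sq_nonneg (x + y))) (Set.mem_Ici.2 (sq_nonneg (x - y)))
    (show (0 : ℝ) ≤ 1 / 2 by norm_num) (show (0 : ℝ) ≤ 1 / 2 by norm_num) (by norm_num)
  simp only [smul_eq_mul] at hc
  rw [show 1 / 2 * (x + y) ^ 2 + 1 / 2 * (x - y) ^ 2 = x ^ 2 + y ^ 2 by ring] at hc
  have hs := Real.rpow_add_le_add_rpow (sq_nonneg x) (sq_nonneg y)
    (p := q / 2) (by linarith) (by linarith)
  simp only [key]
  linarith

namespace MeasureTheory.Lp

variable {α : Type*} [MeasurableSpace α] {μ : Measure α} {q : ℝ}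

theorem integrable_abs_rpow (hq0 : 0 < q) (h : Lp ℝ (ENNReal.ofReal q) μ) :
    Integrable (fun x => |h x| ^ q) μ := by
  have := (Lp.memLp h).integrable_norm_rpow (by simpa using hq0) ENNReal.ofReal_ne_top
  simpa [ENNReal.toReal_ofReal hq0.le] using this

theorem norm_rpow_eq_integral (hq0 : 0 < q) (h : Lp ℝ (ENNReal.ofReal q) μ) :
    ‖h‖ ^ q = ∫ x, |h x| ^ q ∂μ := by
  have hnn : 0 ≤ ∫ x, |h x| ^ q ∂μ := integral_nonneg fun x => by positivity
  rw [Lp.norm_def, (Lp.memLp h).eLpNorm_eq_integral_rpow_norm (by simpa using hq0)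
    ENNReal.ofReal_ne_top, ENNReal.toReal_ofReal hq0.le]
  simp only [Real.norm_eq_abs]
  rw [ENNReal.toReal_ofReal (by positivity), ← Real.rpow_mul hnn, inv_mul_cancel₀ hq0.ne',
    Real.rpow_one]

theorem norm_add_rpow_add_norm_sub_rpow_le (hq0 : 0 < q) (hq2 : q ≤ 2)
    (h₁ h₂ : Lp ℝ (ENNReal.ofReal q) μ) :
    ‖h₁ + h₂‖ ^ q + ‖h₁ - h₂‖ ^ q ≤ 2 * (‖h₁‖ ^ q + ‖h₂‖ ^ q) := by
  simp only [norm_rpow_eq_integral hq0]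
  rw [← integral_add (integrable_abs_rpow hq0 _) (integrable_abs_rpow hq0 _),
    ← integral_add (integrable_abs_rpow hq0 _) (integrable_abs_rpow hq0 _),
    ← integral_const_mul]
  refine integral_mono_ae ((integrable_abs_rpow hq0 _).add (integrable_abs_rpow hq0 _))
    (((integrable_abs_rpow hq0 _).add (integrable_abs_rpow hq0 _)).const_mul 2) ?_
  filter_upwards [Lp.coeFn_add h₁ h₂, Lp.coeFn_sub h₁ h₂] with x hadd hsub
  simp only [hadd, hsub, Pi.add_apply, Pi.sub_apply]
  exact abs_add_rpow_add_abs_sub_rpow_le hq0 hq2 (h₁ x) (h₂ x)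

end MeasureTheory.Lp

theorem integrable_exp_ofReal_mul_I {α : Type*} [MeasurableSpace α] {μ : Measure α}
    [IsFiniteMeasure μ] {h : α → ℝ} (hh : Measurable h) :
    Integrable (fun x => Complex.exp (h x * Complex.I)) μ :=
  Integrable.of_bound (by fun_prop) 1 (.of_forall fun x => (Complex.norm_exp_ofReal_mul_I _).le)

theorem integral_cos_eq_re {α : Type*} [MeasurableSpace α] {μ : Measure α}
    [IsFiniteMeasure μ] {h : α → ℝ} (hh : Measurable h) :
    ∫ x, Real.cos (h x) ∂μ = (∫ x, Complex.exp (h x * Complex.I) ∂μ).re := by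
  have := integral_re (𝕜 := ℂ) (integrable_exp_ofReal_mul_I (μ := μ) hh)
  simpa [Complex.exp_ofReal_mul_I_re] using this

theorem integrable_cos {α : Type*} [MeasurableSpace α] {μ : Measure α} [IsFiniteMeasure μ]
    {h : α → ℝ} (hh : Measurable h) : Integrable (fun x => Real.cos (h x)) μ :=
  Integrable.of_bound (by fun_prop) 1 (.of_forall fun x => Real.abs_cos_le_one _)

/-- If the Fourier transform of the law of `Y` is `exp (-N)` with `N` satisfying one half of the
parallelogram law, then cosine transforms of finite measures are positively correlated. -/
theorem integral_cosTransform_mul_le {Ω E α β : Type*} [MeasurableSpace Ω] {P : Measure Ω}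
    [IsProbabilityMeasure P] [NormedAddCommGroup E] [InnerProductSpace ℝ E] [MeasurableSpace E]
    [BorelSpace E] [SecondCountableTopology E] [MeasurableSpace α] [MeasurableSpace β]
    {μ : Measure α} {ν : Measure β} [IsFiniteMeasure μ] [IsFiniteMeasure ν]
    {Y : Ω → E} (hY : Measurable Y) {A : α → E} (hA : Measurable A) {B : β → E}
    (hB : Measurable B) {N : E → ℝ} (hN : ∀ a b, N (a + b) + N (a - b) ≤ 2 * (N a + N b))
    (hcos : ∀ θ, ∫ ω, Real.cos ⟪θ, Y ω⟫ ∂P = Real.exp (-N θ)) :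
    (∫ ω, ∫ t, Real.cos ⟪A t, Y ω⟫ ∂μ ∂P) * (∫ ω, ∫ r, Real.cos ⟪B r, Y ω⟫ ∂ν ∂P) ≤
      ∫ ω, (∫ t, Real.cos ⟪A t, Y ω⟫ ∂μ) * (∫ r, Real.cos ⟪B r, Y ω⟫ ∂ν) ∂P := by
  have hintA : Integrable (fun z : Ω × α => Real.cos ⟪A z.2, Y z.1⟫) (P.prod μ) :=
    integrable_cos (by fun_prop)
  have hintB : Integrable (fun z : Ω × β => Real.cos ⟪B z.2, Y z.1⟫) (P.prod ν) :=
    integrable_cos (by fun_prop)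
  have hintAB : Integrable (fun z : Ω × (α × β) =>
      Real.cos ⟪A z.2.1, Y z.1⟫ * Real.cos ⟪B z.2.2, Y z.1⟫) (P.prod (μ.prod ν)) := by
    refine Integrable.of_bound (by fun_prop) 1 (.of_forall fun z => ?_)
    rw [norm_mul]
    exact mul_le_one₀ (Real.abs_cos_le_one _) (norm_nonneg _) (Real.abs_cos_le_one _)
  have pointwise (a b : E) : Real.exp (-N a) * Real.exp (-N b) ≤
      ∫ ω, Real.cos ⟪a, Y ω⟫ * Real.cos ⟪b, Y ω⟫ ∂P := by
    have hprod (ω : Ω) : Real.cos ⟪a, Y ω⟫ * Real.cos ⟪b, Y ω⟫ =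
        2⁻¹ * (Real.cos ⟪a + b, Y ω⟫ + Real.cos ⟪a - b, Y ω⟫) := by
      rw [inner_add_left, inner_sub_left, Real.cos_add, Real.cos_sub]
      ring
    simp only [hprod]
    rw [integral_const_mul, integral_add (integrable_cos (by fun_prop))
      (integrable_cos (by fun_prop)), hcos, hcos, ← Real.exp_add]
    have hc := convexOn_exp.2 (Set.mem_univ (-N (a + b))) (Set.mem_univ (-N (a - b)))
      (show (0 : ℝ) ≤ 1 / 2 by norm_num) (show (0 : ℝ) ≤ 1 / 2 by norm_num) (by norm_num)
    simp only [smul_eq_mul] at hc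
    have hle : Real.exp (-N a + -N b) ≤
        Real.exp (1 / 2 * -N (a + b) + 1 / 2 * -N (a - b)) :=
      Real.exp_le_exp.2 (by linarith [hN a b])
    linarith
  rw [integral_integral_swap (f := fun ω t => Real.cos ⟪A t, Y ω⟫) hintA,
    integral_integral_swap (f := fun ω r => Real.cos ⟪B r, Y ω⟫) hintB, ← integral_prod_mul]
  simp only [← integral_prod_mul (μ := μ) (ν := ν)]
  rw [integral_integral_swap
    (f := fun ω (z : α × β) => Real.cos ⟪A z.1, Y ω⟫ * Real.cos ⟪B z.2, Y ω⟫) hintAB]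
  refine integral_mono ?_ hintAB.integral_prod_right fun z => ?_
  · exact hintA.integral_prod_right.mul_prod hintB.integral_prod_right
  · simpa only [hcos] using pointwise (A z.1) (B z.2)

theorem eq_integral_cos_inner {E : Type*} [NormedAddCommGroup E] [InnerProductSpace ℝ E] {l : ℕ}
    {μ : Measure (Fin l → ℝ)} [IsFiniteMeasure μ] {f : (Fin l → ℝ) → ℝ}
    (hf : ∀ u, (f u : ℂ) = ∫ t, Complex.exp (-(∑ i, u i * t i : ℝ) * Complex.I) ∂μ)
    (η : Fin l → E) (y : E) :
    f (fun i => ⟪y, η i⟫) = ∫ t : Fin l → ℝ, Real.cos ⟪∑ i, t i • η i, y⟫ ∂μ := by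
  have hinner (t : Fin l → ℝ) : ⟪∑ i, t i • η i, y⟫ = ∑ i, ⟪y, η i⟫ * t i := by
    simp only [sum_inner, real_inner_smul_left, real_inner_comm y (η _), mul_comm]
  have h := congrArg Complex.re (hf fun i => ⟪y, η i⟫)
  simp only [← Complex.ofReal_neg] at h
  rw [← integral_cos_eq_re (by fun_prop), Complex.ofReal_re] at h
  simpa only [Real.cos_neg, hinner] using h

/-- Theorem 1: correlation inequality for even continuous positive definite functions
of jointly symmetric `q`-stable random variables. -/
theorem stable_posdef_correlation
    (q : ℝ) (hq0 : 0 < q) (hq2 : q ≤ 2)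
    (n k m : ℕ) (hm : m < k)
    (Ω : Type*) [MeasureSpace Ω] [IsProbabilityMeasure (volume : Measure Ω)]
    (Y : Ω → EuclideanSpace ℝ (Fin n)) (hY : Measurable Y)
    (s : Fin n → Lp ℝ (ENNReal.ofReal q) (volume.restrict (Set.Icc (0:ℝ) 1)))
    -- Y is a symmetric q-stable random vector with characteristic function
    -- exp(-‖∑ θ i • s i‖_{L^q}^q)
    (hchar : ∀ θ : EuclideanSpace ℝ (Fin n),
      ∫ ω, Complex.exp ((⟪θ, Y ω⟫ : ℝ) * Complex.I) =
        Complex.exp (-(‖∑ i, θ i • s i‖ ^ q : ℝ)))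
    (ξ : Fin k → EuclideanSpace ℝ (Fin n))
    (f : (Fin m → ℝ) → ℝ) (g : (Fin (k - m) → ℝ) → ℝ)
    (hfc : Continuous f) (hgc : Continuous g)
    (hfe : ∀ u, f (-u) = f u) (hge : ∀ u, g (-u) = g u)
    -- f and g are positive definite: Fourier transforms of finite symmetric measures
    (hf : ∃ μ : Measure (Fin m → ℝ), IsFiniteMeasure μ ∧ μ.map (fun t => -t) = μ ∧
      ∀ u, (f u : ℂ) = ∫ t, Complex.exp (-(∑ i, u i * t i : ℝ) * Complex.I) ∂μ)
    (hg : ∃ ν : Measure (Fin (k - m) → ℝ), IsFiniteMeasure ν ∧ ν.map (fun t => -t) = ν ∧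
      ∀ u, (g u : ℂ) = ∫ t, Complex.exp (-(∑ i, u i * t i : ℝ) * Complex.I) ∂ν) :
    ∫ ω, f (fun i => ⟪Y ω, ξ (Fin.castLE hm.le i)⟫) *
        g (fun j => ⟪Y ω, ξ (Fin.cast (Nat.add_sub_cancel' hm.le) (Fin.natAdd m j))⟫) ≥
      (∫ ω, f (fun i => ⟪Y ω, ξ (Fin.castLE hm.le i)⟫)) *
      (∫ ω, g (fun j => ⟪Y ω, ξ (Fin.cast (Nat.add_sub_cancel' hm.le) (Fin.natAdd m j))⟫)) := by
  obtain ⟨μ, _, -, hμ⟩ := hf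
  obtain ⟨ν, _, -, hν⟩ := hg
  simp only [eq_integral_cos_inner hμ, eq_integral_cos_inner hν]
  refine integral_cosTransform_mul_le hY (by fun_prop) (by fun_prop)
    (N := fun θ => ‖∑ i, θ i • s i‖ ^ q) (fun a b => ?_) fun θ => ?_
  · simp only [PiLp.add_apply, PiLp.sub_apply, add_smul, sub_smul, Finset.sum_add_distrib,
      Finset.sum_sub_distrib]
    exact Lp.norm_add_rpow_add_norm_sub_rpow_le hq0 hq2 _ _
  · rw [integral_cos_eq_re (by fun_prop), hchar, ← Complex.ofReal_neg, Complex.exp_ofReal_re]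
end

section
/- Let F ⊂ ℝ^k be a symmetric convex set with compact closure and nonempty interior. Then ∫_F (x_1² - 1) exp(-‖x‖²/2) dx < 0. -/
open MeasureTheory

open Set in
lemma volume_add_volume_le_of_isCompact {K L : Set ℝ} (hK : IsCompact K) (hL : IsCompact L)
    (hK0 : K.Nonempty) (hL0 : L.Nonempty) {C : Set ℝ} (hC : ∀ x ∈ K, ∀ y ∈ L, x + y ∈ C) :
    volume K + volume L ≤ volume C := by
  obtain ⟨a, haK, ha⟩ := hK.exists_isGreatest hK0
  obtain ⟨b, hbL, hb⟩ := hL.exists_isLeast hL0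
  have hS : volume ((fun x => x + b) '' K) = volume K := by simp
  have hT : volume ((fun x => a + x) '' L) = volume L := by simp
  have hTm : MeasurableSet ((fun x => a + x) '' L) :=
    (hL.image (continuous_const.add continuous_id)).measurableSet
  have hST : volume ((fun x => x + b) '' K ∩ (fun x => a + x) '' L) = 0 := by
    refine measure_mono_null (t := {a + b}) ?_ (by simp)
    rintro _ ⟨⟨x, hx, rfl⟩, ⟨y, hy, hxy⟩⟩
    have h1 := ha hx
    have h2 := hb hy
    simp only [mem_singleton_iff] at *
    linarith
  rw [← hS, ← hT, ← measure_union_add_inter _ hTm, hST, add_zero]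
  refine measure_mono ?_
  rintro _ (⟨x, hx, rfl⟩ | ⟨y, hy, rfl⟩)
  · exact hC x hx b hbL
  · exact hC a haK y hy

/-- The one-dimensional Brunn–Minkowski inequality. -/
lemma volume_add_volume_le {A B : Set ℝ} (hA : MeasurableSet A) (hB : MeasurableSet B)
    (hA0 : A.Nonempty) (hB0 : B.Nonempty) {C : Set ℝ} (hC : ∀ x ∈ A, ∀ y ∈ B, x + y ∈ C) :
    volume A + volume B ≤ volume C := by
  obtain ⟨x₀, hx₀⟩ := hA0
  obtain ⟨y₀, hy₀⟩ := hB0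
  rcases eq_or_ne (volume A) 0 with hA' | hA'
  · rw [hA', zero_add, ← show volume ((fun y => x₀ + y) '' B) = volume B by simp]
    exact measure_mono (by rintro _ ⟨y, hy, rfl⟩; exact hC x₀ hx₀ y hy)
  rcases eq_or_ne (volume B) 0 with hB' | hB'
  · rw [hB', add_zero, ← show volume ((fun x => x + y₀) '' A) = volume A by simp]
    exact measure_mono (by rintro _ ⟨x, hx, rfl⟩; exact hC x hx y₀ hy₀)
  refine le_of_forall_lt fun r hr => ?_
  obtain ⟨s, hs, t, ht, hst⟩ := ENNReal.exists_lt_add_of_lt_add hr hA' hB'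
  obtain ⟨K, hKA, hK, hsK⟩ := hA.exists_lt_isCompact hs
  obtain ⟨L, hLB, hL, htL⟩ := hB.exists_lt_isCompact ht
  have hK0 : K.Nonempty := nonempty_of_measure_ne_zero (pos_of_gt hsK).ne'
  have hL0 : L.Nonempty := nonempty_of_measure_ne_zero (pos_of_gt htL).ne'
  calc r < s + t := hst
    _ ≤ volume K + volume L := add_le_add hsK.le htL.le
    _ ≤ volume C := volume_add_volume_le_of_isCompact hK hL hK0 hL0
        fun x hx y hy => hC x (hKA hx) y (hLB hy)

open Pointwise in
lemma smul_volume_add_smul_volume_le {A B C : Set ℝ} (hA : MeasurableSet A)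
    (hB : MeasurableSet B) (hA0 : A.Nonempty) (hB0 : B.Nonempty) {a b : ℝ} (ha : 0 < a)
    (hb : 0 < b) (hC : ∀ x ∈ A, ∀ y ∈ B, a * x + b * y ∈ C) :
    ENNReal.ofReal a * volume A + ENNReal.ofReal b * volume B ≤ volume C := by
  have h1 : volume (a • A) = ENNReal.ofReal a * volume A := by
    simp [Measure.addHaar_smul, abs_of_pos ha]
  have h2 : volume (b • B) = ENNReal.ofReal b * volume B := by
    simp [Measure.addHaar_smul, abs_of_pos hb]
  rw [← h1, ← h2]
  refine volume_add_volume_le (hA.const_smul₀ a) (hB.const_smul₀ b) hA0.smul_set hB0.smul_set ?_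
  rintro _ ⟨x, hx, rfl⟩ _ ⟨y, hy, rfl⟩
  exact hC x hx y hy

lemma lintegral_eq_lintegral_measure_ofReal_lt {α : Type*} [MeasurableSpace α] {μ : Measure α}
    {f : α → ENNReal} (hf : Measurable f) (hf' : ∀ x, f x ≠ ⊤) :
    ∫⁻ x, f x ∂μ = ∫⁻ t in Set.Ioi (0 : ℝ), μ {x | ENNReal.ofReal t < f x} := by
  have h := lintegral_eq_lintegral_meas_lt μ (f := fun x => (f x).toReal)
    (Filter.Eventually.of_forall fun x => ENNReal.toReal_nonneg) hf.ennreal_toReal.aemeasurable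
  simp only [ENNReal.ofReal_toReal (hf' _)] at h
  rw [h]
  refine setLIntegral_congr_fun measurableSet_Ioi fun t ht => ?_
  simp only [ENNReal.ofReal_lt_iff_lt_toReal (le_of_lt ht) (hf' _)]

lemma ENNReal.rpow_mul_rpow_le_add {a b : ℝ} (ha : 0 < a) (hb : 0 < b) (hab : a + b = 1)
    (x y : ENNReal) : x ^ a * y ^ b ≤ ENNReal.ofReal a * x + ENNReal.ofReal b * y := by
  have hp : (a⁻¹).HolderConjugate b⁻¹ := by
    rw [Real.holderConjugate_iff]
    refine ⟨(one_lt_inv₀ ha).2 (by linarith), by simpa using hab⟩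
  have h := ENNReal.young_inequality (x ^ a) (y ^ b) hp
  rw [← ENNReal.rpow_mul, ← ENNReal.rpow_mul, mul_inv_cancel₀ ha.ne', mul_inv_cancel₀ hb.ne',
    ENNReal.rpow_one, ENNReal.rpow_one, ENNReal.ofReal_inv_of_pos ha,
    ENNReal.ofReal_inv_of_pos hb, div_eq_mul_inv, div_eq_mul_inv, inv_inv, inv_inv] at h
  simpa [mul_comm] using h

/-- The one-dimensional Prékopa–Leindler inequality for functions with supremum `1`. -/
lemma lintegral_add_le_of_iSup_eq_one {f g h : ℝ → ENNReal} (hf : Measurable f)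
    (hg : Measurable g) (hh : Measurable h) {a b : ℝ} (ha : 0 < a) (hb : 0 < b)
    (hab : a + b = 1) (hf1 : ⨆ x, f x = 1) (hg1 : ⨆ x, g x = 1)
    (H : ∀ x y, f x ^ a * g y ^ b ≤ h (a * x + b * y)) :
    ENNReal.ofReal a * (∫⁻ x, f x) + ENNReal.ofReal b * (∫⁻ x, g x) ≤ ∫⁻ x, h x := by
  have hfle : ∀ x, f x ≤ 1 := fun x => hf1 ▸ le_iSup f x
  have hgle : ∀ x, g x ≤ 1 := fun x => hg1 ▸ le_iSup g x
  have hne : ∀ {u : ENNReal}, u ≤ 1 → u ≠ ⊤ := fun hu => (hu.trans_lt ENNReal.one_lt_top).ne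
  have hmh : Measurable fun x => min (h x) 1 := hh.min measurable_const
  refine le_trans ?_ (lintegral_mono fun x => min_le_left (h x) 1)
  rw [lintegral_eq_lintegral_measure_ofReal_lt hf fun x => hne (hfle x),
    lintegral_eq_lintegral_measure_ofReal_lt hg fun x => hne (hgle x),
    lintegral_eq_lintegral_measure_ofReal_lt hmh fun x => hne (min_le_right _ _),
    ← lintegral_const_mul' _ _ ENNReal.ofReal_ne_top,
    ← lintegral_const_mul' _ _ ENNReal.ofReal_ne_top]
  have hmeas : ∀ u : ℝ → ENNReal,
      Measurable fun t : ℝ => volume {x | ENNReal.ofReal t < u x} := fun u =>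
    Antitone.measurable fun s t hst => measure_mono fun x hx =>
      (ENNReal.ofReal_le_ofReal hst).trans_lt hx
  rw [← lintegral_add_left ((hmeas f).const_mul _)]
  refine setLIntegral_mono (hmeas _) fun t ht => ?_
  rcases lt_or_ge t 1 with ht1 | ht1
  · have ht1' : ENNReal.ofReal t < 1 := by simpa using ht1
    have ht0 : ENNReal.ofReal t ≠ 0 := by simpa using ht
    refine smul_volume_add_smul_volume_le (measurableSet_lt measurable_const hf)
      (measurableSet_lt measurable_const hg) (lt_iSup_iff.1 (ht1'.trans_eq hf1.symm))
      (lt_iSup_iff.1 (ht1'.trans_eq hg1.symm)) ha hb fun x hx y hy => lt_min ?_ ht1'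
    refine lt_of_lt_of_le ?_ (H x y)
    calc ENNReal.ofReal t = ENNReal.ofReal t ^ a * ENNReal.ofReal t ^ b := by
          rw [← ENNReal.rpow_add_of_nonneg _ _ ha.le hb.le, hab, ENNReal.rpow_one]
      _ < f x ^ a * g y ^ b :=
          ENNReal.mul_lt_mul (ENNReal.rpow_lt_rpow hx ha) (ENNReal.rpow_lt_rpow hy hb)
  · have ht1' : 1 ≤ ENNReal.ofReal t := by simpa using ht1
    have h1 : {x | ENNReal.ofReal t < f x} = ∅ :=
      Set.eq_empty_of_forall_notMem fun x hx => absurd ((hfle x).trans ht1') (not_le.2 hx)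
    have h2 : {x | ENNReal.ofReal t < g x} = ∅ :=
      Set.eq_empty_of_forall_notMem fun x hx => absurd ((hgle x).trans ht1') (not_le.2 hx)
    simp [h1, h2]

lemma prekopa_leindler_real_of_bounded {f g h : ℝ → ENNReal} (hf : Measurable f)
    (hg : Measurable g) (hh : Measurable h) {a b : ℝ} (ha : 0 < a) (hb : 0 < b)
    (hab : a + b = 1) (hf1 : ⨆ x, f x ≠ ⊤) (hg1 : ⨆ x, g x ≠ ⊤)
    (H : ∀ x y, f x ^ a * g y ^ b ≤ h (a * x + b * y)) :
    (∫⁻ x, f x) ^ a * (∫⁻ x, g x) ^ b ≤ ∫⁻ x, h x := by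
  set A := ⨆ x, f x
  set B := ⨆ x, g x
  rcases eq_or_ne A 0 with hA0 | hA0
  · have : ∀ x, f x = 0 := ENNReal.iSup_eq_zero.1 hA0
    simp [this, ENNReal.zero_rpow_of_pos ha]
  rcases eq_or_ne B 0 with hB0 | hB0
  · have : ∀ x, g x = 0 := ENNReal.iSup_eq_zero.1 hB0
    simp [this, ENNReal.zero_rpow_of_pos hb]
  have key := lintegral_add_le_of_iSup_eq_one (f := fun x => A⁻¹ * f x)
    (g := fun x => B⁻¹ * g x) (h := fun x => ((A⁻¹) ^ a * (B⁻¹) ^ b) * h x)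
    (hf.const_mul _) (hg.const_mul _) (hh.const_mul _) ha hb hab
    (by rw [← ENNReal.mul_iSup, ENNReal.inv_mul_cancel hA0 hf1])
    (by rw [← ENNReal.mul_iSup, ENNReal.inv_mul_cancel hB0 hg1])
    (fun x y => by
      rw [ENNReal.mul_rpow_of_nonneg _ _ ha.le, ENNReal.mul_rpow_of_nonneg _ _ hb.le,
        mul_mul_mul_comm]
      gcongr
      exact H x y)
  have key' := (ENNReal.rpow_mul_rpow_le_add ha hb hab _ _).trans key
  rw [lintegral_const_mul _ hf, lintegral_const_mul _ hg, lintegral_const_mul _ hh,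
    ENNReal.mul_rpow_of_nonneg _ _ ha.le, ENNReal.mul_rpow_of_nonneg _ _ hb.le,
    mul_mul_mul_comm] at key'
  refine (ENNReal.mul_le_mul_iff_right ?_ ?_).1 key'
  · simp [ENNReal.rpow_eq_zero_iff, hf1, hg1, ha.not_gt, hb.not_gt]
  · refine ENNReal.mul_ne_top ?_ ?_
    · exact ENNReal.rpow_ne_top_of_nonneg ha.le (by simpa using hA0)
    · exact ENNReal.rpow_ne_top_of_nonneg hb.le (by simpa using hB0)

/-- The one-dimensional Prékopa–Leindler inequality. -/
lemma prekopa_leindler_real {f g h : ℝ → ENNReal} (hf : Measurable f)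
    (hg : Measurable g) (hh : Measurable h) {a b : ℝ} (ha : 0 < a) (hb : 0 < b)
    (hab : a + b = 1) (H : ∀ x y, f x ^ a * g y ^ b ≤ h (a * x + b * y)) :
    (∫⁻ x, f x) ^ a * (∫⁻ x, g x) ^ b ≤ ∫⁻ x, h x := by
  have hmin : ∀ u : ENNReal, ⨆ n : ℕ, min u (n : ENNReal) = u := fun u => by
    rw [← inf_iSup_eq, ENNReal.iSup_natCast, inf_top_eq]
  have htrunc : ∀ u : ℝ → ENNReal, Measurable u →
      ∫⁻ x, u x = ⨆ n : ℕ, ∫⁻ x, min (u x) n := fun u hu => by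
    rw [← lintegral_iSup (fun n => hu.min measurable_const)
      (fun m n hmn x => min_le_min_left _ (by exact_mod_cast hmn))]
    simp only [hmin]
  have hrpow : ∀ {c : ℝ}, 0 < c → ∀ u : ℕ → ENNReal, (⨆ n, u n) ^ c = ⨆ n, u n ^ c :=
    fun hc u => (ENNReal.orderIsoRpow _ hc).map_iSup u
  rw [htrunc f hf, htrunc g hg, hrpow ha, hrpow hb, ENNReal.iSup_mul]
  refine iSup_le fun m => ?_
  rw [ENNReal.mul_iSup]
  refine iSup_le fun n => ?_
  refine prekopa_leindler_real_of_bounded (hf.min measurable_const) (hg.min measurable_const) hh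
    ha hb hab ?_ ?_ fun x y => ?_
  · exact ((iSup_le fun x => min_le_right _ _).trans_lt (ENNReal.natCast_lt_top m)).ne
  · exact ((iSup_le fun x => min_le_right _ _).trans_lt (ENNReal.natCast_lt_top n)).ne
  · refine le_trans ?_ (H x y)
    gcongr <;> exact min_le_left _ _

lemma lintegral_fin_succ {n : ℕ} {f : (Fin (n + 1) → ℝ) → ENNReal} (hf : Measurable f) :
    ∫⁻ x, f x = ∫⁻ t : ℝ, ∫⁻ z : Fin n → ℝ, f (Fin.cons t z) := by
  have h := (volume_preserving_piFinSuccAbove (fun _ : Fin (n + 1) => ℝ) 0).symm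
  rw [← h.lintegral_comp hf]
  rw [Measure.volume_eq_prod, lintegral_prod
    (fun p => f ((MeasurableEquiv.piFinSuccAbove (fun _ => ℝ) 0).symm p))
    (hf.comp h.measurable).aemeasurable]
  simp [MeasurableEquiv.piFinSuccAbove, Fin.insertNthEquiv]

lemma measurable_fin_cons {n : ℕ} :
    Measurable fun p : ℝ × (Fin n → ℝ) => (Fin.cons p.1 p.2 : Fin (n + 1) → ℝ) := by
  refine measurable_pi_lambda _ fun i => ?_
  refine Fin.cases ?_ (fun j => ?_) i
  · simpa using measurable_fst
  · simpa [Function.comp_def] using (measurable_pi_apply j).comp measurable_snd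

/-- The Prékopa–Leindler inequality. -/
theorem prekopa_leindler {n : ℕ} {f g h : (Fin n → ℝ) → ENNReal} (hf : Measurable f)
    (hg : Measurable g) (hh : Measurable h) {a b : ℝ} (ha : 0 < a) (hb : 0 < b)
    (hab : a + b = 1) (H : ∀ x y, f x ^ a * g y ^ b ≤ h (a • x + b • y)) :
    (∫⁻ x, f x) ^ a * (∫⁻ x, g x) ^ b ≤ ∫⁻ x, h x := by
  induction n with
  | zero =>
    simp only [Measure.volume_pi_eq_dirac (default : Fin 0 → ℝ), lintegral_dirac]
    convert H default default
  | succ n ih =>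
    have hsec : ∀ {u : (Fin (n + 1) → ℝ) → ENNReal}, Measurable u → ∀ t : ℝ,
        Measurable fun z : Fin n → ℝ => u (Fin.cons t z) := fun hu t =>
      hu.comp (measurable_fin_cons.comp measurable_prodMk_left)
    have hmarg : ∀ {u : (Fin (n + 1) → ℝ) → ENNReal}, Measurable u →
        Measurable fun t : ℝ => ∫⁻ z : Fin n → ℝ, u (Fin.cons t z) := fun hu =>
      (hu.comp measurable_fin_cons).lintegral_prod_right'
    rw [lintegral_fin_succ hf, lintegral_fin_succ hg, lintegral_fin_succ hh]
    refine prekopa_leindler_real (hmarg hf) (hmarg hg) (hmarg hh) ha hb hab fun s t =>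
      ih (hsec hf s) (hsec hg t) (hsec hh _) fun x y => ?_
    convert H (Fin.cons s x) (Fin.cons t y) using 2
    ext i
    refine Fin.cases ?_ (fun j => ?_) i <;> simp

lemma integral_sq_sub_one_mul_exp :
    Integrable (fun t : ℝ => (t ^ 2 - 1) * Real.exp (-t ^ 2 / 2)) ∧
      ∫ t : ℝ, (t ^ 2 - 1) * Real.exp (-t ^ 2 / 2) = 0 := by
  have h0 : Integrable fun t : ℝ => Real.exp (-t ^ 2 / 2) := by
    convert integrable_exp_neg_mul_sq (b := 1 / 2) (by norm_num) using 3
    ring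
  have h1 : Integrable fun t : ℝ => t * Real.exp (-t ^ 2 / 2) := by
    convert integrable_mul_exp_neg_mul_sq (b := 1 / 2) (by norm_num) using 4
    ring
  have h2 : Integrable fun t : ℝ => t ^ 2 * Real.exp (-t ^ 2 / 2) := by
    convert integrable_rpow_mul_exp_neg_mul_sq (b := 1 / 2) (by norm_num) (s := 2) (by norm_num)
      using 4
    · norm_num
    · ring
  have h3 : Integrable fun t : ℝ => (t ^ 2 - 1) * Real.exp (-t ^ 2 / 2) := by
    refine (h2.sub h0).congr (Filter.Eventually.of_forall fun t => ?_)
    simp only [Pi.sub_apply]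
    ring
  refine ⟨h3, integral_eq_zero_of_hasDerivAt_of_integrable
    (f := fun t => -(t * Real.exp (-t ^ 2 / 2))) (fun t => ?_) h3 h1.neg⟩
  have hd : HasDerivAt (fun t : ℝ => -t ^ 2 / 2) (-t) t := by
    refine ((hasDerivAt_pow 2 t).neg.div_const 2).congr_deriv ?_
    norm_num
    ring
  refine ((hasDerivAt_id' t).mul hd.exp).neg.congr_deriv ?_
  ring

/-- The Gaussian weight of the slice of `V` at height `t` of the first coordinate. -/
noncomputable def sliceWeight {n : ℕ} (V : Set (Fin (n + 1) → ℝ)) (t : ℝ) : ℝ :=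
  ∫ z in {z : Fin n → ℝ | Fin.cons t z ∈ V}, Real.exp (-(∑ i, z i ^ 2) / 2)

section Slice

variable {n : ℕ} {V : Set (Fin (n + 1) → ℝ)}

lemma continuous_exp_neg_sum_sq {ι : Type*} [Fintype ι] :
    Continuous fun z : ι → ℝ => Real.exp (-(∑ i, z i ^ 2) / 2) := by
  fun_prop

lemma continuous_fin_cons (t : ℝ) :
    Continuous fun z : Fin n → ℝ => (Fin.cons t z : Fin (n + 1) → ℝ) :=
  continuous_const.finCons continuous_id

lemma isOpen_slice (hV : IsOpen V) (t : ℝ) : IsOpen {z : Fin n → ℝ | Fin.cons t z ∈ V} :=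
  hV.preimage (continuous_fin_cons t)

lemma slice_subset_closedBall {R : ℝ} (hR : V ⊆ Metric.closedBall 0 R) (t : ℝ) :
    {z : Fin n → ℝ | Fin.cons t z ∈ V} ⊆ Metric.closedBall 0 R := by
  intro z hz
  have h : ‖(Fin.cons t z : Fin (n + 1) → ℝ)‖ ≤ R := by simpa using hR hz
  have hR0 : 0 ≤ R := (norm_nonneg _).trans h
  rw [mem_closedBall_zero_iff, pi_norm_le_iff_of_nonneg hR0]
  intro i
  simpa using (norm_le_pi_norm (Fin.cons t z : Fin (n + 1) → ℝ) i.succ).trans h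

lemma integrableOn_slice {R : ℝ} (hR : V ⊆ Metric.closedBall 0 R) (t : ℝ) :
    IntegrableOn (fun z : Fin n → ℝ => Real.exp (-(∑ i, z i ^ 2) / 2))
      {z : Fin n → ℝ | Fin.cons t z ∈ V} :=
  (continuous_exp_neg_sum_sq.continuousOn.integrableOn_compact
    (isCompact_closedBall 0 R)).mono_set (slice_subset_closedBall hR t)

lemma sliceWeight_nonneg (t : ℝ) : 0 ≤ sliceWeight V t :=
  integral_nonneg fun _ => (Real.exp_pos _).le

lemma sliceWeight_pos (hV : IsOpen V) {R : ℝ} (hR : V ⊆ Metric.closedBall 0 R) {t : ℝ}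
    (ht : ∃ z : Fin n → ℝ, Fin.cons t z ∈ V) : 0 < sliceWeight V t := by
  rw [sliceWeight, setIntegral_pos_iff_support_of_nonneg_ae
    (Filter.Eventually.of_forall fun _ => (Real.exp_pos _).le) (integrableOn_slice hR t),
    show Function.support (fun z : Fin n → ℝ => Real.exp (-(∑ i, z i ^ 2) / 2)) = Set.univ from
      Set.eq_univ_of_forall fun z => (Real.exp_pos _).ne', Set.univ_inter]
  exact (isOpen_slice hV t).measure_pos volume ht

lemma sliceWeight_eq_zero {R : ℝ} (hR : V ⊆ Metric.closedBall 0 R) {t : ℝ} (ht : R < |t|) :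
    sliceWeight V t = 0 := by
  have : {z : Fin n → ℝ | Fin.cons t z ∈ V} = ∅ := by
    refine Set.eq_empty_of_forall_notMem fun z hz => ht.not_ge ?_
    have h : ‖(Fin.cons t z : Fin (n + 1) → ℝ)‖ ≤ R := by simpa using hR hz
    simpa using (norm_le_pi_norm (Fin.cons t z : Fin (n + 1) → ℝ) 0).trans h
  simp [sliceWeight, this]

lemma sliceWeight_neg (hsymm : ∀ x ∈ V, -x ∈ V) (t : ℝ) :
    sliceWeight V (-t) = sliceWeight V t := by
  have hcons : ∀ z : Fin n → ℝ, (Fin.cons (-t) (-z) : Fin (n + 1) → ℝ) = -Fin.cons t z := by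
    intro z
    ext i
    refine Fin.cases ?_ (fun j => ?_) i <;> simp
  have hset : (Neg.neg : (Fin n → ℝ) → Fin n → ℝ) ⁻¹' {z | Fin.cons (-t) z ∈ V} =
      {z | Fin.cons t z ∈ V} := by
    ext z
    simp only [Set.mem_preimage, Set.mem_ofPred_eq, hcons]
    exact ⟨fun h => by simpa using hsymm _ h, hsymm _⟩
  have h := (Measure.measurePreserving_neg (volume : Measure (Fin n → ℝ))).setIntegral_preimage_emb
    (MeasurableEquiv.neg _).measurableEmbedding
    (fun z => Real.exp (-(∑ i, z i ^ 2) / 2)) {z | Fin.cons (-t) z ∈ V}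
  rw [hset] at h
  rw [sliceWeight, ← h]
  simp [sliceWeight]

lemma ofReal_sliceWeight (hV : IsOpen V) {R : ℝ} (hR : V ⊆ Metric.closedBall 0 R) (t : ℝ) :
    ENNReal.ofReal (sliceWeight V t) = ∫⁻ z, {z : Fin n → ℝ | Fin.cons t z ∈ V}.indicator
      (fun z => ENNReal.ofReal (Real.exp (-(∑ i, z i ^ 2) / 2))) z := by
  rw [lintegral_indicator (isOpen_slice hV t).measurableSet, sliceWeight,
    ofReal_integral_eq_lintegral_ofReal (integrableOn_slice hR t)
      (Filter.Eventually.of_forall fun _ => (Real.exp_pos _).le)]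

/-- Slice weights are log-concave. -/
lemma sliceWeight_rpow_mul_le (hV : IsOpen V) (hconv : Convex ℝ V) {R : ℝ}
    (hR : V ⊆ Metric.closedBall 0 R) {a b : ℝ} (ha : 0 < a) (hb : 0 < b) (hab : a + b = 1)
    (s t : ℝ) :
    ENNReal.ofReal (sliceWeight V s) ^ a * ENNReal.ofReal (sliceWeight V t) ^ b ≤
      ENNReal.ofReal (sliceWeight V (a * s + b * t)) := by
  have hmeas : ∀ r : ℝ, Measurable ({z : Fin n → ℝ | Fin.cons r z ∈ V}.indicator
      (fun z => ENNReal.ofReal (Real.exp (-(∑ i, z i ^ 2) / 2)))) := fun r =>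
    continuous_exp_neg_sum_sq.measurable.ennreal_ofReal.indicator (isOpen_slice hV r).measurableSet
  simp only [ofReal_sliceWeight hV hR]
  refine prekopa_leindler (hmeas s) (hmeas t) (hmeas _) ha hb hab fun x y => ?_
  by_cases hx : Fin.cons s x ∈ V
  swap
  · simp [Set.indicator, hx, ENNReal.zero_rpow_of_pos ha]
  by_cases hy : Fin.cons t y ∈ V
  swap
  · simp [Set.indicator, hy, ENNReal.zero_rpow_of_pos hb]
  have hxy : Fin.cons (a * s + b * t) (a • x + b • y) ∈ V := by
    convert hconv hx hy ha.le hb.le hab using 1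
    ext i
    refine Fin.cases ?_ (fun j => ?_) i <;> simp
  rw [Set.indicator_of_mem (by exact hx), Set.indicator_of_mem (by exact hy),
    Set.indicator_of_mem (by exact hxy), ENNReal.ofReal_rpow_of_pos (Real.exp_pos _),
    ENNReal.ofReal_rpow_of_pos (Real.exp_pos _), ← ENNReal.ofReal_mul (by positivity),
    ← Real.exp_mul, ← Real.exp_mul, ← Real.exp_add]
  refine ENNReal.ofReal_le_ofReal (Real.exp_le_exp.2 ?_)
  have hsum : ∑ i, (a • x + b • y) i ^ 2 ≤ a * ∑ i, x i ^ 2 + b * ∑ i, y i ^ 2 := by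
    rw [Finset.mul_sum, Finset.mul_sum, ← Finset.sum_add_distrib]
    refine Finset.sum_le_sum fun i _ => ?_
    have := (even_two.convexOn_pow (𝕜 := ℝ)).2 (Set.mem_univ (x i)) (Set.mem_univ (y i))
      ha.le hb.le hab
    simpa using this
  linarith

lemma sliceWeight_le_of_abs_lt (hV : IsOpen V) (hconv : Convex ℝ V)
    (hsymm : ∀ x ∈ V, -x ∈ V) {R : ℝ} (hR : V ⊆ Metric.closedBall 0 R) {s t : ℝ}
    (hst : |s| < t) : sliceWeight V t ≤ sliceWeight V s := by
  have ht : 0 < t := (abs_nonneg s).trans_lt hst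
  obtain ⟨h1, h2⟩ := abs_lt.1 hst
  have ha : 0 < (t - s) / (2 * t) := div_pos (by linarith) (by linarith)
  have hb : 0 < (t + s) / (2 * t) := div_pos (by linarith) (by linarith)
  have hab : (t - s) / (2 * t) + (t + s) / (2 * t) = 1 := by
    field_simp
    ring
  have h := sliceWeight_rpow_mul_le hV hconv hR ha hb hab (-t) t
  rw [sliceWeight_neg hsymm, ← ENNReal.rpow_add_of_nonneg _ _ ha.le hb.le, hab,
    ENNReal.rpow_one, ENNReal.ofReal_le_ofReal_iff (sliceWeight_nonneg _)] at h
  convert h using 2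
  field_simp
  ring

lemma sq_sub_one_mul_sliceWeight_nonneg (hV : IsOpen V) (hconv : Convex ℝ V)
    (hsymm : ∀ x ∈ V, -x ∈ V) {R : ℝ} (hR : V ⊆ Metric.closedBall 0 R) (t : ℝ) :
    0 ≤ (t ^ 2 - 1) * (sliceWeight V 1 - sliceWeight V t) := by
  rcases lt_trichotomy |t| 1 with h | h | h
  · have h1 := sliceWeight_le_of_abs_lt hV hconv hsymm hR h
    have h2 : t ^ 2 < 1 := (sq_lt_one_iff_abs_lt_one t).2 h
    exact mul_nonneg_of_nonpos_of_nonpos (by linarith) (by linarith)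
  · have h2 : t ^ 2 = 1 := by rw [← sq_abs, h, one_pow]
    simp [h2]
  · have h1 := sliceWeight_le_of_abs_lt hV hconv hsymm hR (s := 1) (t := |t|) (by simpa using h)
    have h3 : sliceWeight V |t| = sliceWeight V t := by
      rcases abs_choice t with h | h <;> rw [h]
      exact sliceWeight_neg hsymm t
    have h2 : 1 < t ^ 2 := (one_lt_sq_iff_one_lt_abs t).2 h
    exact mul_nonneg (by linarith) (by linarith)

lemma integral_eq_integral_sliceWeight (hV : IsOpen V) {R : ℝ}
    (hR : V ⊆ Metric.closedBall 0 R) :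
    Integrable (fun t : ℝ => (t ^ 2 - 1) * Real.exp (-t ^ 2 / 2) * sliceWeight V t) ∧
      ∫ x in V, (x 0 ^ 2 - 1) * Real.exp (-(∑ i, x i ^ 2) / 2) =
        ∫ t : ℝ, (t ^ 2 - 1) * Real.exp (-t ^ 2 / 2) * sliceWeight V t := by
  set G : (Fin (n + 1) → ℝ) → ℝ :=
    V.indicator fun x => (x 0 ^ 2 - 1) * Real.exp (-(∑ i, x i ^ 2) / 2) with hG
  have hcont : Continuous fun x : Fin (n + 1) → ℝ =>
      (x 0 ^ 2 - 1) * Real.exp (-(∑ i, x i ^ 2) / 2) := by fun_prop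
  have hGint : Integrable G := by
    rw [hG, integrable_indicator_iff hV.measurableSet]
    exact (hcont.continuousOn.integrableOn_compact (isCompact_closedBall 0 R)).mono_set hR
  have hmp := (volume_preserving_piFinSuccAbove (fun _ : Fin (n + 1) => ℝ) 0).symm
  have hsymm_eq : ∀ p : ℝ × (Fin n → ℝ),
      (MeasurableEquiv.piFinSuccAbove (fun _ : Fin (n + 1) => ℝ) 0).symm p =
        Fin.cons p.1 p.2 := fun p => by
    simp [MeasurableEquiv.piFinSuccAbove, Fin.insertNthEquiv]
  have hcomp : Integrable (fun p : ℝ × (Fin n → ℝ) => G (Fin.cons p.1 p.2))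
      (volume.prod volume) := by
    have := (hmp.integrable_comp_emb (MeasurableEquiv.measurableEmbedding _)).2 hGint
    simpa only [Function.comp_def, hsymm_eq, Measure.volume_eq_prod] using this
  have hinner : ∀ t : ℝ, ∫ z : Fin n → ℝ, G (Fin.cons t z) =
      (t ^ 2 - 1) * Real.exp (-t ^ 2 / 2) * sliceWeight V t := fun t => by
    rw [sliceWeight, ← integral_indicator (isOpen_slice hV t).measurableSet,
      ← integral_const_mul]
    congr 1
    ext z
    by_cases hz : Fin.cons t z ∈ V
    · rw [hG, Set.indicator_of_mem hz, Set.indicator_of_mem (by exact hz), mul_assoc,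
        ← Real.exp_add, Fin.sum_univ_succ]
      simp only [Fin.cons_zero, Fin.cons_succ]
      ring_nf
    · rw [hG, Set.indicator_of_notMem hz, Set.indicator_of_notMem (by exact hz), mul_zero]
  have h1 := hcomp.integral_prod_left
  simp only [hinner] at h1
  refine ⟨h1, ?_⟩
  rw [← integral_indicator hV.measurableSet, ← hG, ← hmp.integral_comp' G]
  simp only [hsymm_eq]
  rw [Measure.volume_eq_prod, integral_prod _ hcomp]
  simp only [hinner]

lemma integral_neg_of_isOpen (hV : IsOpen V) (hconv : Convex ℝ V)
    (hsymm : ∀ x ∈ V, -x ∈ V) {R : ℝ} (hR : V ⊆ Metric.closedBall 0 R) (hne : V.Nonempty) :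
    ∫ x in V, (x 0 ^ 2 - 1) * Real.exp (-(∑ i, x i ^ 2) / 2) < 0 := by
  obtain ⟨hwint, heq⟩ := integral_eq_integral_sliceWeight hV hR
  obtain ⟨hgint, hgauss⟩ := integral_sq_sub_one_mul_exp
  rw [heq]
  by_contra! hI
  set D : ℝ → ℝ := fun t => (t ^ 2 - 1) * Real.exp (-t ^ 2 / 2) * sliceWeight V 1 -
    (t ^ 2 - 1) * Real.exp (-t ^ 2 / 2) * sliceWeight V t with hD
  have hDeq : ∀ t, D t = Real.exp (-t ^ 2 / 2) *
      ((t ^ 2 - 1) * (sliceWeight V 1 - sliceWeight V t)) := fun t => by rw [hD]; ring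
  have hD0 : 0 ≤ D := fun t => by
    rw [hDeq]
    exact mul_nonneg (Real.exp_pos _).le
      (sq_sub_one_mul_sliceWeight_nonneg hV hconv hsymm hR t)
  have hDint : Integrable D := (hgint.mul_const _).sub hwint
  have hDle : ∫ t, D t ≤ 0 := by
    rw [hD, integral_sub (hgint.mul_const _) hwint, integral_mul_const, hgauss]
    linarith
  have hDae := (integral_eq_zero_iff_of_nonneg hD0 hDint).1
    (le_antisymm hDle (integral_nonneg hD0))
  have hae : ∀ᵐ t : ℝ, t ≠ 1 ∧ t ≠ -1 ∧ D t = 0 := by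
    filter_upwards [hDae, Measure.ae_ne volume (1 : ℝ), Measure.ae_ne volume (-1 : ℝ)]
      with t h h1 h2
    exact ⟨h1, h2, h⟩
  have hconst : ∀ᵐ t : ℝ, sliceWeight V t = sliceWeight V 1 := by
    filter_upwards [hae] with t ht
    obtain ⟨h1, h2, h⟩ := ht
    rw [hDeq] at h
    have h3 : t ^ 2 - 1 ≠ 0 := fun h =>
      (sq_eq_sq_iff_eq_or_eq_neg.1 (by linarith : t ^ 2 = 1 ^ 2)).elim h1 h2
    have h4 := (mul_eq_zero.1
      ((mul_eq_zero.1 h).resolve_left (Real.exp_pos _).ne')).resolve_left h3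
    linarith
  have hexists : ∀ U : Set ℝ, IsOpen U → U.Nonempty →
      ∃ t ∈ U, sliceWeight V t = sliceWeight V 1 := fun U hU hU0 => by
    have hdense := Measure.dense_of_ae hconst
    obtain ⟨t, ht, ht'⟩ := hdense.inter_open_nonempty U hU hU0
    exact ⟨t, ht, ht'⟩
  obtain ⟨t, ht, ht'⟩ := hexists (Set.Ioi R) isOpen_Ioi ⟨R + 1, by simp⟩
  rw [sliceWeight_eq_zero hR (lt_of_lt_of_le ht (le_abs_self t))] at ht'
  obtain ⟨x, hx⟩ := hne
  obtain ⟨s, hs, hs'⟩ := hexists {s : ℝ | (Fin.cons s (Fin.tail x) : Fin (n + 1) → ℝ) ∈ V}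
    (hV.preimage (continuous_id.finCons continuous_const)) ⟨x 0, by simpa using hx⟩
  exact (sliceWeight_pos hV hR ⟨_, hs⟩).ne' (hs'.trans ht'.symm)

end Slice

/-- For a symmetric convex set `F ⊂ ℝ^k` with compact closure and nonempty interior,
`∫_F (x₁² - 1) exp(-‖x‖²/2) dx < 0`. -/
theorem integral_convex_symmetric_neg (k : ℕ) (hk : 0 < k)
    (F : Set (EuclideanSpace ℝ (Fin k)))
    (hFconv : Convex ℝ F) (hFsymm : F = -F)
    (hFcomp : IsCompact (closure F)) (hFint : (interior F).Nonempty) :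
    ∫ x in F, (x ⟨0, hk⟩ ^ 2 - 1) * Real.exp (-‖x‖ ^ 2 / 2) < 0 := by
  obtain ⟨n, rfl⟩ : ∃ n, k = n + 1 := ⟨k - 1, by omega⟩
  set e := (EuclideanSpace.equiv (Fin (n + 1)) ℝ).symm
  have hmp : MeasurePreserving (WithLp.toLp 2 : (Fin (n + 1) → ℝ) → _) :=
    PiLp.volume_preserving_toLp (Fin (n + 1))
  rw [← setIntegral_congr_set (interior_ae_eq_of_null_frontier (hFconv.addHaar_frontier volume)),
    ← hmp.setIntegral_preimage_emb (MeasurableEquiv.toLp 2 (Fin (n + 1) → ℝ)).measurableEmbedding]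
  simp only [EuclideanSpace.norm_sq_eq, Real.norm_eq_abs, sq_abs]
  have hsymm : ∀ x ∈ interior F, -x ∈ interior F := by
    intro x hx
    have h : interior F = -interior F := by
      conv_lhs => rw [hFsymm]
      exact ((Homeomorph.neg _).preimage_interior F).symm
    rw [h] at hx
    exact hx
  obtain ⟨R, hR⟩ := (e.symm.lipschitz.isBounded_image
    (hFcomp.isBounded.subset (interior_subset.trans subset_closure))).subset_closedBall 0
  refine integral_neg_of_isOpen (isOpen_interior.preimage e.continuous)
    (hFconv.interior.linear_preimage e.toLinearMap) (fun x hx => ?_) (R := R) (fun x hx => ?_) ?_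
  · simpa using hsymm _ hx
  · exact hR ⟨_, hx, rfl⟩
  · obtain ⟨y, hy⟩ := hFint
    exact ⟨e.symm y, hy⟩
end
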